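/- (Björling data determine the frame coefficients along a curve.) Let Σ ⊆ ℂ be open, f : Σ → su(2) a smooth conformal immersion with conformal factor e^u, F : Σ → SU(2) a smooth frame with F e₁ F⁻¹ = f_x/|f_x| and F e₂ F⁻¹ = f_y/|f_y|, N = F e₃ F⁻¹, Q = ⟨N,f_{zz}⟩, and H = (1/8)e^{-2u}⟨f_{xx}+f_{yy},N⟩. Write F⁻¹ ∂_x F = [[a,b],[-b̄,-a]]. Then at every point of Σ: (i) a is purely imaginary and u_z = a + (1/2)u_x; and (ii) Q = -2e^u( b̄ + H e^u ). -/

import Mathlib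

open Matrix Complex

noncomputable section

attribute [local instance] Matrix.linftyOpNormedAddCommGroup Matrix.linftyOpNormedSpace
  Matrix.linftyOpNormedRing Matrix.linftyOpNormedAlgebra

/-- The space of 2×2 complex matrices. -/
abbrev M2 : Type := Matrix (Fin 2) (Fin 2) ℂ

/-- Basis vector `e₁` of su(2). -/
def e1 : M2 := !![0, -Complex.I; -Complex.I, 0]

/-- Basis vector `e₂` of su(2). -/
def e2 : M2 := !![0, 1; -1, 0]

/-- Basis vector `e₃` of su(2). -/
def e3 : M2 := !![Complex.I, 0; 0, -Complex.I]

/-- The inner product `⟨X,Y⟩ = -(1/2) tr (XY)` identifying su(2) with E³. -/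
def ip (X Y : M2) : ℂ := -(1/2 : ℂ) * (X * Y).trace

/-- Partial derivative in the `x`-direction. -/
def px (f : ℂ → M2) (z : ℂ) : M2 := fderiv ℝ f z 1

/-- Partial derivative in the `y`-direction. -/
def py (f : ℂ → M2) (z : ℂ) : M2 := fderiv ℝ f z Complex.I

/-- Wirtinger derivative `∂_z = (1/2)(∂_x - i ∂_y)`. -/
def dz (f : ℂ → M2) (z : ℂ) : M2 := (2:ℂ)⁻¹ • (px f z - Complex.I • py f z)

/-- Wirtinger derivative `∂_z̄ = (1/2)(∂_x + i ∂_y)`. -/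
def dzb (f : ℂ → M2) (z : ℂ) : M2 := (2:ℂ)⁻¹ • (px f z + Complex.I • py f z)

/-- `x`-derivative of a real-valued function on ℂ. -/
def pxR (u : ℂ → ℝ) (z : ℂ) : ℝ := fderiv ℝ u z 1

/-- `y`-derivative of a real-valued function on ℂ. -/
def pyR (u : ℂ → ℝ) (z : ℂ) : ℝ := fderiv ℝ u z Complex.I

/-- Wirtinger derivative `u_z` of a real-valued function. -/
def dzR (u : ℂ → ℝ) (z : ℂ) : ℂ := (2:ℂ)⁻¹ * ((pxR u z : ℂ) - Complex.I * (pyR u z : ℂ))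

/-- Wirtinger derivative `u_z̄` of a real-valued function. -/
def dzbR (u : ℂ → ℝ) (z : ℂ) : ℂ := (2:ℂ)⁻¹ * ((pxR u z : ℂ) + Complex.I * (pyR u z : ℂ))

/-- `x`-derivative of a complex-valued function on ℂ. -/
def pxC (q : ℂ → ℂ) (z : ℂ) : ℂ := fderiv ℝ q z 1

/-- `y`-derivative of a complex-valued function on ℂ. -/
def pyC (q : ℂ → ℂ) (z : ℂ) : ℂ := fderiv ℝ q z Complex.I

/-- Wirtinger derivative `∂_z` of a complex-valued function. -/
def dzC (q : ℂ → ℂ) (z : ℂ) : ℂ := (2:ℂ)⁻¹ * (pxC q z - Complex.I * pyC q z)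

/-- Wirtinger derivative `∂_z̄` of a complex-valued function. -/
def dzbC (q : ℂ → ℂ) (z : ℂ) : ℂ := (2:ℂ)⁻¹ * (pxC q z + Complex.I * pyC q z)

/-!
Write `ω = F⁻¹ ∂_x F`. Differentiating `F e F⁻¹` produces the commutator `[F⁻¹ ∂F, e]`, and the
invariance `⟨[X, Y], Z⟩ = ⟨X, [Y, Z]⟩` of the inner product turns every component of a second
derivative of `f` in the moving frame into a component of `F⁻¹ ∂F`. The `e₁`-component of
`∂_y f_x = ∂_x f_y` reads `u_y = ⟨ω, [e₂, e₁]⟩ = -2 ⟨ω, e₃⟩`, which is the formula for `u_z`. The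
normal components of `f_xx` and `f_xy` depend only on `ω`, and `f_yy` is eliminated in favour of `H`
by writing `f_zz = ∂_x f_z - ¼ Δf`; this is the formula for `Q`.
-/

open Filter Topology

section NormedField

variable {𝕜 E G : Type*} [NontriviallyNormedField 𝕜] [NormedAddCommGroup E] [NormedSpace 𝕜 E]
  [NormedAddCommGroup G] [NormedSpace 𝕜 G]

theorem differentiableAt_fderiv_apply {f : E → G} {z : E}
    (hf : ContDiffAt 𝕜 2 f z) (v : E) : DifferentiableAt 𝕜 (fun w => fderiv 𝕜 f w v) z :=
  ((hf.fderiv_right (m := 1) (by norm_num)).differentiableAt one_ne_zero).clm_apply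
    (differentiableAt_const v)

theorem fderiv_smul_conj {A : Type*} [NormedRing A] [NormedAlgebra 𝕜 A] [HasSummableGeomSeries A]
    {c : E → 𝕜} {F : E → A} {z : E} (hc : DifferentiableAt 𝕜 c z) (hF : DifferentiableAt 𝕜 F z)
    (hFz : IsUnit (F z)) (e : A) (v : E) :
    fderiv 𝕜 (fun w => c w • (F w * e * Ring.inverse (F w))) z v =
      F z * (fderiv 𝕜 c z v • e + c z • ⁅Ring.inverse (F z) * fderiv 𝕜 F z v, e⁆) *
        Ring.inverse (F z) := by
  obtain ⟨U, hU⟩ := hFz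
  have hinverse : HasFDerivAt Ring.inverse _ (F z) := hU ▸ hasFDerivAt_ringInverse (𝕜 := 𝕜) U
  have hinv : HasFDerivAt (fun w => Ring.inverse (F w)) _ z := hinverse.comp z hF.hasFDerivAt
  rw [(hc.hasFDerivAt.fun_smul ((hF.hasFDerivAt.mul_const' e).fun_mul' hinv)).fderiv]
  simp [← hU, Ring.lie_def, mul_add, add_mul, mul_sub, sub_mul, smul_sub, mul_assoc]
  abel

end NormedField

section Real

variable {E G : Type*} [NormedAddCommGroup E] [NormedSpace ℝ E] [NormedAddCommGroup G]
  [NormedSpace ℝ G]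

theorem fderiv_fderiv_apply_comm {f : E → G} {z : E} (hf : ContDiffAt ℝ 2 f z) (v w : E) :
    fderiv ℝ (fun x => fderiv ℝ f x v) z w = fderiv ℝ (fun x => fderiv ℝ f x w) z v := by
  have hdf : DifferentiableAt ℝ (fderiv ℝ f) z :=
    (hf.fderiv_right (m := 1) (by norm_num)).differentiableAt one_ne_zero
  have hsymm : IsSymmSndFDerivAt ℝ f z := hf.isSymmSndFDerivAt (by simp)
  simpa [fderiv_clm_apply hdf (differentiableAt_const _)] using hsymm w v

theorem star_mul_fderiv_mem_skewAdjoint {A : Type*} [NormedRing A] [StarRing A]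
    [NormedAlgebra ℝ A] [StarModule ℝ A] [hstar : ContinuousStar A]
    {F : E → A} {z : E} (hF : DifferentiableAt ℝ F z) (hunitary : ∀ᶠ w in 𝓝 z, F w ∈ unitary A)
    (v : E) : star (F z) * fderiv ℝ F z v ∈ skewAdjoint A := by
  have hconst : (fun w => star (F w) * F w) =ᶠ[𝓝 z] fun _ => 1 :=
    hunitary.mono fun w hw => (Unitary.mem_iff.1 hw).1
  have hderiv : star (F z) * fderiv ℝ F z v + star (fderiv ℝ F z v) * F z = 0 := by
    simpa [(hF.hasFDerivAt.star.fun_mul' hF.hasFDerivAt).fderiv] using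
      DFunLike.congr_fun (hconst.fderiv_eq (𝕜 := ℝ)) v
  rw [skewAdjoint.mem_iff, star_mul, star_star]
  exact (neg_eq_of_add_eq_zero_right hderiv).symm

end Real

section Determinant

theorem sum_det_updateRow_eq_trace_adjugate_mul {n R : Type*} [Fintype n] [DecidableEq n]
    [CommRing R] (A B : Matrix n n R) :
    ∑ i, (A.updateRow i (B i)).det = (A.adjugate * B).trace := by
  simp_rw [← cramer_transpose_apply, cramer_eq_adjugate_mulVec, ← adjugate_transpose]
  simp only [mulVec, dotProduct, transpose_apply, trace, diag_apply, Matrix.mul_apply]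
  exact Finset.sum_comm

variable {𝕜 E n R : Type*} [NontriviallyNormedField 𝕜] [NormedAddCommGroup E] [NormedSpace 𝕜 E]
  [Fintype n] [DecidableEq n] [NormedCommRing R] [NormedAlgebra 𝕜 R]
  {F : E → Matrix n n R} {z : E}

theorem fderiv_det_apply (hF : DifferentiableAt 𝕜 F z) (v : E) :
    fderiv 𝕜 (fun w => (F w).det) z v = ((F z).adjugate * fderiv 𝕜 F z v).trace := by
  let det : ContinuousMultilinearMap 𝕜 (fun _ : n => n → R) R :=
    ⟨(detRowAlternating (n := n) (R := R)).toMultilinearMap.restrictScalars 𝕜,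
      Continuous.matrix_det continuous_id⟩
  have hdet : HasFDerivAt (fun w => (F w).det) ((det.linearDeriv (F z)).comp (fderiv 𝕜 F z)) z :=
    HasFDerivAt.comp z (det.hasFDerivAt (F z)) hF.hasFDerivAt
  rw [hdet.fderiv, ← sum_det_updateRow_eq_trace_adjugate_mul]
  exact det.linearDeriv_apply _ _

theorem trace_inv_mul_fderiv_eq_zero (hF : DifferentiableAt 𝕜 F z) {d : R}
    (hdet : ∀ᶠ w in 𝓝 z, (F w).det = d) (v : E) :
    ((F z)⁻¹ * fderiv 𝕜 F z v).trace = 0 := by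
  have hderiv : fderiv 𝕜 (fun w => (F w).det) z v = 0 := by
    simp [EventuallyEq.fderiv_eq (f := fun _ => d) hdet]
  rw [Matrix.inv_def, smul_mul, trace_smul, ← fderiv_det_apply hF, hderiv, smul_zero]

end Determinant

section SpecialUnitary

theorem inv_mul_fderiv_mem_skewAdjoint {E n : Type*} [NormedAddCommGroup E] [NormedSpace ℝ E]
    [Fintype n] [DecidableEq n] {F : E → Matrix n n ℂ} {z : E} (hF : DifferentiableAt ℝ F z)
    (hunitary : ∀ᶠ w in 𝓝 z, F w ∈ unitaryGroup n ℂ) (v : E) :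
    (F z)⁻¹ * fderiv ℝ F z v ∈ skewAdjoint (Matrix n n ℂ) := by
  have hinv : (F z)⁻¹ = star (F z) :=
    inv_eq_left_inv (mem_unitaryGroup_iff'.1 hunitary.self_of_nhds)
  rw [hinv]
  -- The norm topology on matrices unfolds to the product topology only past instance transparency.
  exact star_mul_fderiv_mem_skewAdjoint (hstar := instContinuousStarMatrix) hF hunitary v

theorem re_apply_self_eq_zero_of_mem_skewAdjoint {n : Type*} {M : Matrix n n ℂ}
    (hM : M ∈ skewAdjoint (Matrix n n ℂ)) (i : n) : (M i i).re = 0 := by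
  have hii : starRingEnd ℂ (M i i) = -M i i := congrFun₂ hM i i
  have hre : (M i i).re = -(M i i).re := congrArg re hii
  linarith

theorem eq_of_mem_skewAdjoint_of_trace_eq_zero {M : M2} (hM : M ∈ skewAdjoint M2)
    (htrace : M.trace = 0) :
    M = !![M 0 0, M 0 1; -starRingEnd ℂ (M 0 1), -M 0 0] := by
  have h10 : starRingEnd ℂ (M 0 1) = -M 1 0 := congrFun₂ hM 1 0
  have h11 : M 1 1 = -M 0 0 := eq_neg_of_add_eq_zero_right (trace_fin_two M ▸ htrace)
  rw [h10, neg_neg, ← h11]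
  exact eta_fin_two M

end SpecialUnitary

section InnerProduct

theorem ip_comm (X Y : M2) : ip X Y = ip Y X := by
  rw [ip, ip, trace_mul_comm]

theorem ip_add_left (X Y Z : M2) : ip (X + Y) Z = ip X Z + ip Y Z := by
  rw [ip, ip, ip, add_mul, trace_add, mul_add]

theorem ip_zero_right (X : M2) : ip X 0 = 0 := by
  rw [ip, mul_zero, trace_zero, mul_zero]

theorem ip_smul_left {R : Type*} [Monoid R] [DistribMulAction R ℂ] [IsScalarTower R ℂ ℂ]
    [SMulCommClass R ℂ ℂ] (c : R) (X Y : M2) : ip (c • X) Y = c • ip X Y := by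
  rw [ip, ip, smul_mul, trace_smul, mul_smul_comm]

theorem ip_smul_right {R : Type*} [Monoid R] [DistribMulAction R ℂ] [IsScalarTower R ℂ ℂ]
    [SMulCommClass R ℂ ℂ] (c : R) (X Y : M2) : ip X (c • Y) = c • ip X Y := by
  rw [ip_comm, ip_smul_left, ip_comm]

theorem ip_lie (X Y Z : M2) : ip ⁅X, Y⁆ Z = ip X ⁅Y, Z⁆ := by
  simp only [ip, Ring.lie_def, sub_mul, mul_sub, trace_sub]
  rw [mul_assoc, mul_assoc, trace_mul_comm Y (X * Z), mul_assoc]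

theorem ip_conj {P : M2} (hP : IsUnit P.det) (X Y : M2) :
    ip (P * X * P⁻¹) (P * Y * P⁻¹) = ip X Y := by
  have : P * X * P⁻¹ * (P * Y * P⁻¹) = P * (X * Y) * P⁻¹ := by
    simp only [mul_assoc, nonsing_inv_mul_cancel_left P _ hP]
  rw [ip, this, trace_mul_comm, nonsing_inv_mul_cancel_left P _ hP, ip]

theorem ip_e1_right (M : M2) : ip M e1 = I / 2 * (M 0 1 + M 1 0) := by
  simp [ip, e1, trace_fin_two, Matrix.mul_apply]
  ring

theorem ip_e2_right (M : M2) : ip M e2 = (M 0 1 - M 1 0) / 2 := by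
  simp [ip, e2, trace_fin_two, Matrix.mul_apply]
  ring

theorem ip_e3_right (M : M2) : ip M e3 = -I / 2 * (M 0 0 - M 1 1) := by
  simp [ip, e3, trace_fin_two, Matrix.mul_apply]
  ring

theorem lie_e1_e3 : ⁅e1, e3⁆ = (-2 : ℂ) • e2 := by
  ext i j
  fin_cases i <;> fin_cases j <;>
    norm_num [e1, e2, e3, Ring.lie_def, two_mul, sub_eq_add_neg]

theorem lie_e2_e1 : ⁅e2, e1⁆ = (-2 : ℂ) • e3 := by
  ext i j
  fin_cases i <;> fin_cases j <;>
    norm_num [e1, e2, e3, Ring.lie_def, two_mul, sub_eq_add_neg]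

theorem lie_e2_e3 : ⁅e2, e3⁆ = (2 : ℂ) • e1 := by
  ext i j
  fin_cases i <;> fin_cases j <;>
    norm_num [e1, e2, e3, Ring.lie_def, two_mul, sub_eq_add_neg]

end InnerProduct

section Wirtinger

variable {f : ℂ → M2} {z : ℂ}

theorem py_px_eq_px_py (hf : ContDiffAt ℝ 2 f z) : py (px f) z = px (py f) z :=
  fderiv_fderiv_apply_comm hf 1 I

theorem fderiv_dz_apply (hf : ContDiffAt ℝ 2 f z) (v : ℂ) :
    fderiv ℝ (dz f) z v = (2 : ℂ)⁻¹ • (fderiv ℝ (px f) z v - I • fderiv ℝ (py f) z v) := by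
  have hpx : HasFDerivAt (px f) _ z := (differentiableAt_fderiv_apply hf 1).hasFDerivAt
  have hpy : HasFDerivAt (py f) _ z := (differentiableAt_fderiv_apply hf I).hasFDerivAt
  exact DFunLike.congr_fun ((hpx.sub (hpy.const_smul I)).const_smul (2 : ℂ)⁻¹).fderiv v

-- `∂_z = ∂_x - ∂_z̄` and `4 ∂_z̄ ∂_z` is the Laplacian.
theorem dz_dz_eq_px_dz_sub_laplacian (hf : ContDiffAt ℝ 2 f z) :
    dz (dz f) z = px (dz f) z - (4 : ℂ)⁻¹ • (px (px f) z + py (py f) z) := by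
  have hpx : px (dz f) z = (2 : ℂ)⁻¹ • (px (px f) z - I • px (py f) z) := fderiv_dz_apply hf 1
  have hpy : py (dz f) z = (2 : ℂ)⁻¹ • (px (py f) z - I • py (py f) z) :=
    py_px_eq_px_py hf ▸ fderiv_dz_apply hf I
  rw [dz, hpx, hpy]
  linear_combination (norm := module) (4 : ℂ)⁻¹ • I_sq • py (py f) z

end Wirtinger

theorem ip_fderiv_smul_conj {E : Type*} [NormedAddCommGroup E] [NormedSpace ℝ E]
    {g F : E → M2} {c : E → ℝ} {z : E} {e : M2}
    (hc : DifferentiableAt ℝ c z) (hF : DifferentiableAt ℝ F z) (hFz : IsUnit (F z).det)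
    (hg : g =ᶠ[𝓝 z] fun w => c w • (F w * e * (F w)⁻¹)) (v : E) (X : M2) :
    ip (fderiv ℝ g z v) (F z * X * (F z)⁻¹) =
      fderiv ℝ c z v * ip e X + c z * ip ((F z)⁻¹ * fderiv ℝ F z v) ⁅e, X⁆ := by
  have hderiv : fderiv ℝ g z v =
      F z * (fderiv ℝ c z v • e + c z • ⁅(F z)⁻¹ * fderiv ℝ F z v, e⁆) * (F z)⁻¹ := by
    simp only [nonsing_inv_eq_ringInverse] at hg ⊢
    rw [hg.fderiv_eq]
    exact fderiv_smul_conj hc hF ((isUnit_iff_isUnit_det _).2 hFz) e v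
  rw [hderiv, ip_conj hFz, ip_add_left, ip_smul_left, ip_smul_left, ip_lie, real_smul, real_smul]

/-- `F` is an `SU(2)`-frame adapted to the surface `f` with conformal factor `e^u` near `z`: the
frame vectors `F e₁ F⁻¹` and `F e₂ F⁻¹` are the unit vectors along `f_x` and `f_y`, whose length is
`2 e^u`. The identities hold on a neighbourhood of `z`, the regularity is that at `z`. -/
structure IsConformalFrameAt (f : ℂ → M2) (u : ℂ → ℝ) (F : ℂ → M2) (z : ℂ) : Prop where
  contDiffAt : ContDiffAt ℝ 2 f z
  differentiableAt_logFactor : DifferentiableAt ℝ u z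
  differentiableAt_frame : DifferentiableAt ℝ F z
  mem_specialUnitaryGroup : ∀ᶠ w in 𝓝 z, F w ∈ specialUnitaryGroup (Fin 2) ℂ
  px_eq : px f =ᶠ[𝓝 z] fun w => (2 * Real.exp (u w)) • (F w * e1 * (F w)⁻¹)
  py_eq : py f =ᶠ[𝓝 z] fun w => (2 * Real.exp (u w)) • (F w * e2 * (F w)⁻¹)

namespace IsConformalFrameAt

variable {f : ℂ → M2} {u : ℂ → ℝ} {F : ℂ → M2} {z : ℂ}

theorem ip_fderiv_leg (h : IsConformalFrameAt f u F z) {g : ℂ → M2} {e : M2}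
    (hg : g =ᶠ[𝓝 z] fun w => (2 * Real.exp (u w)) • (F w * e * (F w)⁻¹)) (v : ℂ) (X : M2) :
    ip (fderiv ℝ g z v) (F z * X * (F z)⁻¹) =
      2 * Real.exp (u z) * (fderiv ℝ u z v * ip e X + ip ((F z)⁻¹ * fderiv ℝ F z v) ⁅e, X⁆) := by
  have hdet : IsUnit (F z).det := by
    simp [(mem_specialUnitaryGroup_iff.1 h.mem_specialUnitaryGroup.self_of_nhds).2]
  have hfactor : HasFDerivAt (fun w => 2 * Real.exp (u w)) _ z :=
    h.differentiableAt_logFactor.hasFDerivAt.exp.const_mul 2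
  rw [ip_fderiv_smul_conj hfactor.differentiableAt h.differentiableAt_frame hdet hg,
    hfactor.fderiv]
  simp only [_root_.smul_apply, smul_eq_mul]
  push_cast
  ring

theorem ip_px_px_normal (h : IsConformalFrameAt f u F z) :
    ip (px (px f) z) (F z * e3 * (F z)⁻¹) =
      -4 * Real.exp (u z) * ip ((F z)⁻¹ * px F z) e2 := by
  have horth : ip e1 e3 = 0 := by simp [ip_e3_right, e1]
  rw [px, h.ip_fderiv_leg h.px_eq, horth, lie_e1_e3, ip_smul_right, px, smul_eq_mul]
  ring

theorem ip_px_py_normal (h : IsConformalFrameAt f u F z) :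
    ip (px (py f) z) (F z * e3 * (F z)⁻¹) =
      4 * Real.exp (u z) * ip ((F z)⁻¹ * px F z) e1 := by
  have horth : ip e2 e3 = 0 := by simp [ip_e3_right, e2]
  rw [px, h.ip_fderiv_leg h.py_eq, horth, lie_e2_e3, ip_smul_right, px, smul_eq_mul]
  ring

theorem pyR_eq (h : IsConformalFrameAt f u F z) :
    (pyR u z : ℂ) = -2 * ip ((F z)⁻¹ * px F z) e3 := by
  have hnorm : ip e1 e1 = 1 := by norm_num [ip, e1, trace_fin_two]
  have horth : ip e2 e1 = 0 := by simp [ip_e1_right, e2]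
  have hfactor : (2 * Real.exp (u z) : ℂ) ≠ 0 := mod_cast (by positivity : 2 * Real.exp (u z) ≠ 0)
  have hcompat : fderiv ℝ (px f) z I = fderiv ℝ (py f) z 1 := py_px_eq_px_py h.contDiffAt
  have hcomponent := h.ip_fderiv_leg h.px_eq I e1
  rw [hcompat, h.ip_fderiv_leg h.py_eq 1 e1, hnorm, horth, lie_e2_e1, ip_smul_right, Ring.lie_def,
    sub_self, ip_zero_right, mul_zero, zero_add, add_zero, mul_one] at hcomponent
  exact (mul_left_cancel₀ hfactor hcomponent).symm

theorem dzR_eq (h : IsConformalFrameAt f u F z) :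
    dzR u z = (2 : ℂ)⁻¹ * pxR u z +
      (2 : ℂ)⁻¹ * (((F z)⁻¹ * px F z) 0 0 - ((F z)⁻¹ * px F z) 1 1) := by
  rw [dzR, h.pyR_eq, ip_e3_right]
  linear_combination (-(2 : ℂ)⁻¹ * (((F z)⁻¹ * px F z) 0 0 - ((F z)⁻¹ * px F z) 1 1)) * I_sq

theorem ip_px_dz_normal (h : IsConformalFrameAt f u F z) :
    ip (px (dz f) z) (F z * e3 * (F z)⁻¹) =
      2 * Real.exp (u z) * ((F z)⁻¹ * px F z) 1 0 := by
  have hpx : px (dz f) z = (2 : ℂ)⁻¹ • (px (px f) z + (-I) • px (py f) z) := by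
    rw [neg_smul, ← sub_eq_add_neg]
    exact fderiv_dz_apply h.contDiffAt 1
  rw [hpx, ip_smul_left, ip_add_left, ip_smul_left, h.ip_px_px_normal, h.ip_px_py_normal,
    ip_e1_right, ip_e2_right, smul_eq_mul, smul_eq_mul]
  linear_combination (-Real.exp (u z) * (((F z)⁻¹ * px F z) 0 1 + ((F z)⁻¹ * px F z) 1 0)) * I_sq

theorem inv_mul_px_mem_skewAdjoint (h : IsConformalFrameAt f u F z) :
    (F z)⁻¹ * px F z ∈ skewAdjoint M2 :=
  inv_mul_fderiv_mem_skewAdjoint h.differentiableAt_frame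
    (h.mem_specialUnitaryGroup.mono fun _ hw => (mem_specialUnitaryGroup_iff.1 hw).1) 1

theorem trace_inv_mul_px_eq_zero (h : IsConformalFrameAt f u F z) :
    ((F z)⁻¹ * px F z).trace = 0 :=
  trace_inv_mul_fderiv_eq_zero h.differentiableAt_frame
    (h.mem_specialUnitaryGroup.mono fun _ hw => (mem_specialUnitaryGroup_iff.1 hw).2) 1

end IsConformalFrameAt

theorem isConformalFrameAt_of_mem_isOpen {S : Set ℂ} (hS : IsOpen S) {f : ℂ → M2} {u : ℂ → ℝ}
    {F : ℂ → M2} (hf : ContDiffOn ℝ 2 f S) (hu : DifferentiableOn ℝ u S)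
    (hF : DifferentiableOn ℝ F S) (hSU : ∀ w ∈ S, (F w)ᴴ * F w = 1 ∧ (F w).det = 1)
    (he1 : ∀ w ∈ S, F w * e1 * (F w)⁻¹ = (((2 * Real.exp (u w))⁻¹ : ℝ) : ℂ) • px f w)
    (he2 : ∀ w ∈ S, F w * e2 * (F w)⁻¹ = (((2 * Real.exp (u w))⁻¹ : ℝ) : ℂ) • py f w)
    {z : ℂ} (hz : z ∈ S) : IsConformalFrameAt f u F z := by
  have hSz : S ∈ 𝓝 z := hS.mem_nhds hz
  have eq_smul_of_eq_inv_smul {X Y : M2} {w : ℂ}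
      (h : X = (((2 * Real.exp (u w))⁻¹ : ℝ) : ℂ) • Y) : Y = (2 * Real.exp (u w)) • X := by
    rw [h, coe_smul, smul_inv_smul₀ (by positivity)]
  exact
    { contDiffAt := hf.contDiffAt hSz
      differentiableAt_logFactor := hu.differentiableAt hSz
      differentiableAt_frame := hF.differentiableAt hSz
      mem_specialUnitaryGroup := eventually_of_mem hSz fun w hw =>
        mem_specialUnitaryGroup_iff.2 ⟨mem_unitaryGroup_iff'.2 (hSU w hw).1, (hSU w hw).2⟩
      px_eq := eventually_of_mem hSz fun w hw => eq_smul_of_eq_inv_smul (he1 w hw)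
      py_eq := eventually_of_mem hSz fun w hw => eq_smul_of_eq_inv_smul (he2 w hw) }

theorem frame_coefficients_from_bjorling_data_general {f : ℂ → M2} {u : ℂ → ℝ} {F : ℂ → M2} {z : ℂ}
    (h : IsConformalFrameAt f u F z) {N : M2} (hN : N = F z * e3 * (F z)⁻¹)
    {Q : ℂ} (hQ : Q = ip N (dz (dz f) z))
    {H : ℂ} (hH : H = (((8 * Real.exp (2 * u z))⁻¹ : ℝ) : ℂ) *
      ip (px (px f) z + py (py f) z) N)
    {a b : ℂ} (ha : a = ((F z)⁻¹ * px F z) 0 0) (hb : b = ((F z)⁻¹ * px F z) 0 1) :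
    (F z)⁻¹ * px F z = !![a, b; -starRingEnd ℂ b, -a] ∧ a.re = 0 ∧
      dzR u z = a + (2 : ℂ)⁻¹ * pxR u z ∧
      Q = -2 * Real.exp (u z) * (starRingEnd ℂ b + H * Real.exp (u z)) := by
  have hskew := h.inv_mul_px_mem_skewAdjoint
  have hform : (F z)⁻¹ * px F z = !![a, b; -starRingEnd ℂ b, -a] :=
    ha ▸ hb ▸ eq_of_mem_skewAdjoint_of_trace_eq_zero hskew h.trace_inv_mul_px_eq_zero
  refine ⟨hform, ha ▸ re_apply_self_eq_zero_of_mem_skewAdjoint hskew 0, ?_, ?_⟩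
  · rw [h.dzR_eq, hform]
    simp
    ring
  · have hlaplacian : ip (px (px f) z + py (py f) z) N = 8 * Real.exp (u z) ^ 2 * H := by
      rw [hH, two_mul, Real.exp_add]
      push_cast
      field_simp
    have hnormal : ip (px (dz f) z) N = -2 * Real.exp (u z) * starRingEnd ℂ b := by
      rw [hN, h.ip_px_dz_normal, hform]
      simp
    rw [hQ, ip_comm, dz_dz_eq_px_dz_sub_laplacian h.contDiffAt, sub_eq_add_neg, ← neg_smul,
      ip_add_left, ip_smul_left, hnormal, hlaplacian, smul_eq_mul]
    ring

/-- Björling data determine the frame coefficients along a curve: writing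
`F⁻¹ ∂_x F = [[a,b],[-b̄,-a]]`, the coefficient `a` is purely imaginary,
`u_z = a + (1/2) u_x`, and `Q = -2 e^u (b̄ + H e^u)`. -/
theorem frame_coefficients_from_bjorling_data
    (S : Set ℂ) (hS : IsOpen S)
    (f : ℂ → M2) (u : ℂ → ℝ) (F : ℂ → M2)
    (hf : ContDiffOn ℝ (⊤ : ℕ∞) f S)
    (hu : ContDiffOn ℝ (⊤ : ℕ∞) u S)
    (hF : ContDiffOn ℝ (⊤ : ℕ∞) F S)
    (hsu2 : ∀ z ∈ S, (f z)ᴴ = -(f z) ∧ (f z).trace = 0)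
    (hconf : ∀ z ∈ S,
      ip (px f z) (px f z) = ((4 * Real.exp (2 * u z) : ℝ) : ℂ) ∧
      ip (py f z) (py f z) = ((4 * Real.exp (2 * u z) : ℝ) : ℂ) ∧
      ip (px f z) (py f z) = 0)
    (hFunit : ∀ z ∈ S, (F z)ᴴ * F z = 1 ∧ (F z).det = 1)
    (hFe1 : ∀ z ∈ S, F z * e1 * (F z)⁻¹ = (((2 * Real.exp (u z))⁻¹ : ℝ) : ℂ) • px f z)
    (hFe2 : ∀ z ∈ S, F z * e2 * (F z)⁻¹ = (((2 * Real.exp (u z))⁻¹ : ℝ) : ℂ) • py f z)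
    (N : ℂ → M2) (hN : ∀ z, N z = F z * e3 * (F z)⁻¹)
    (Q : ℂ → ℂ) (hQ : ∀ z, Q z = ip (N z) (dz (dz f) z))
    (H : ℂ → ℂ)
    (hH : ∀ z, H z = (((8 * Real.exp (2 * u z))⁻¹ : ℝ) : ℂ) *
      ip (px (px f) z + py (py f) z) (N z))
    (a b : ℂ → ℂ)
    (hA : ∀ z, a z = ((F z)⁻¹ * px F z) 0 0)
    (hB : ∀ z, b z = ((F z)⁻¹ * px F z) 0 1) :
    ∀ z ∈ S,
      ((F z)⁻¹ * px F z = !![a z, b z; -((starRingEnd ℂ) (b z)), -(a z)]) ∧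
      (a z).re = 0 ∧
      dzR u z = a z + (2:ℂ)⁻¹ * ((pxR u z : ℝ) : ℂ) ∧
      Q z = -2 * (Real.exp (u z) : ℂ) *
        ((starRingEnd ℂ) (b z) + H z * (Real.exp (u z) : ℂ)) := by
  exact fun z hz => frame_coefficients_from_bjorling_data_general
    (isConformalFrameAt_of_mem_isOpen hS (hf.of_le (by norm_cast)) (hu.differentiableOn (by simp))
      (hF.differentiableOn (by simp)) hFunit hFe1 hFe2 hz) (hN z) (hQ z) (hH z) (hA z) (hB z)
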